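/- For every even integer t with 2 ≤ t ≤ 12 there exists a linear code over the field with 32 elements of length 42, dimension 2t, minimum distance at least 42 − (3t + 2) = 40 − 3t, and locality 2. In particular (t = 10), there exists a linear code over the field with 32 elements of length 42, dimension 20, minimum distance at least 10, and locality 2. -/

import Mathlib

/-- Concrete model of the field with 32 elements: binary polynomials modulo `z^5 + z^2 + 1`. -/
@[ext] structure K32 where
  c0 : Bool
  c1 : Bool
  c2 : Bool
  c3 : Bool
  c4 : Bool
deriving DecidableEq

namespace K32

instance : Zero K32 := ⟨⟨false, false, false, false, false⟩⟩
instance : One K32 := ⟨⟨true, false, false, false, false⟩⟩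
instance : Add K32 := ⟨fun a b =>
  ⟨a.c0 + b.c0, a.c1 + b.c1, a.c2 + b.c2, a.c3 + b.c3, a.c4 + b.c4⟩⟩
instance : Neg K32 := ⟨fun a => a⟩
instance : Mul K32 := ⟨fun a b =>
  ⟨a.c0 * b.c0 + (a.c1 * b.c4 + a.c2 * b.c3 + a.c3 * b.c2 + a.c4 * b.c1) + a.c4 * b.c4,
   a.c0 * b.c1 + a.c1 * b.c0 + (a.c2 * b.c4 + a.c3 * b.c3 + a.c4 * b.c2),
   a.c0 * b.c2 + a.c1 * b.c1 + a.c2 * b.c0 + (a.c3 * b.c4 + a.c4 * b.c3)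
     + (a.c1 * b.c4 + a.c2 * b.c3 + a.c3 * b.c2 + a.c4 * b.c1) + a.c4 * b.c4,
   a.c0 * b.c3 + a.c1 * b.c2 + a.c2 * b.c1 + a.c3 * b.c0 + a.c4 * b.c4
     + (a.c2 * b.c4 + a.c3 * b.c3 + a.c4 * b.c2),
   a.c0 * b.c4 + a.c1 * b.c3 + a.c2 * b.c2 + a.c3 * b.c1 + a.c4 * b.c0
     + (a.c3 * b.c4 + a.c4 * b.c3)⟩⟩

lemma zero_def : (0 : K32) = ⟨0, 0, 0, 0, 0⟩ := rfl
lemma one_def : (1 : K32) = ⟨1, 0, 0, 0, 0⟩ := rfl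
lemma add_def (a b : K32) : a + b =
  ⟨a.c0 + b.c0, a.c1 + b.c1, a.c2 + b.c2, a.c3 + b.c3, a.c4 + b.c4⟩ := rfl
lemma neg_def (a : K32) : -a = a := rfl
lemma mul_def (a b : K32) : a * b =
  ⟨a.c0 * b.c0 + (a.c1 * b.c4 + a.c2 * b.c3 + a.c3 * b.c2 + a.c4 * b.c1) + a.c4 * b.c4,
   a.c0 * b.c1 + a.c1 * b.c0 + (a.c2 * b.c4 + a.c3 * b.c3 + a.c4 * b.c2),
   a.c0 * b.c2 + a.c1 * b.c1 + a.c2 * b.c0 + (a.c3 * b.c4 + a.c4 * b.c3)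
     + (a.c1 * b.c4 + a.c2 * b.c3 + a.c3 * b.c2 + a.c4 * b.c1) + a.c4 * b.c4,
   a.c0 * b.c3 + a.c1 * b.c2 + a.c2 * b.c1 + a.c3 * b.c0 + a.c4 * b.c4
     + (a.c2 * b.c4 + a.c3 * b.c3 + a.c4 * b.c2),
   a.c0 * b.c4 + a.c1 * b.c3 + a.c2 * b.c2 + a.c3 * b.c1 + a.c4 * b.c0
     + (a.c3 * b.c4 + a.c4 * b.c3)⟩ := rfl

lemma bool_add_self (a : Bool) : a + a = 0 := by cases a <;> rfl

instance : CommRing K32 where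
  add_assoc a b c := by simp only [add_def]; ext1 <;> dsimp only <;> ring
  zero_add a := by simp only [add_def, zero_def]; ext1 <;> dsimp only <;> ring
  add_zero a := by simp only [add_def, zero_def]; ext1 <;> dsimp only <;> ring
  add_comm a b := by simp only [add_def]; ext1 <;> dsimp only <;> ring
  neg_add_cancel a := by
    simp only [add_def, neg_def, zero_def]; ext1 <;> dsimp only <;> exact bool_add_self _
  mul_assoc a b c := by simp only [mul_def]; ext1 <;> dsimp only <;> ring
  one_mul a := by simp only [mul_def, one_def]; ext1 <;> dsimp only <;> ring
  mul_one a := by simp only [mul_def, one_def]; ext1 <;> dsimp only <;> ring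
  zero_mul a := by simp only [mul_def, zero_def]; ext1 <;> dsimp only <;> ring
  mul_zero a := by simp only [mul_def, zero_def]; ext1 <;> dsimp only <;> ring
  left_distrib a b c := by simp only [mul_def, add_def]; ext1 <;> dsimp only <;> ring
  right_distrib a b c := by simp only [mul_def, add_def]; ext1 <;> dsimp only <;> ring
  mul_comm a b := by simp only [mul_def]; ext1 <;> dsimp only <;> ring
  nsmul := nsmulRec
  zsmul := zsmulRec

/-- Coordinates as a product of Booleans. -/
def equivProd : K32 ≃ Bool × Bool × Bool × Bool × Bool where
  toFun a := (a.c0, a.c1, a.c2, a.c3, a.c4)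
  invFun b := ⟨b.1, b.2.1, b.2.2.1, b.2.2.2.1, b.2.2.2.2⟩
  left_inv _ := rfl
  right_inv _ := rfl

instance : Fintype K32 := Fintype.ofEquiv _ equivProd.symm

lemma card_eq : Fintype.card K32 = 32 := by
  rw [Fintype.card_congr equivProd]; rfl

lemma forall_iff (p : K32 → Prop) :
    (∀ a, p a) ↔ ∀ b0 b1 b2 b3 b4 : Bool, p ⟨b0, b1, b2, b3, b4⟩ :=
  ⟨fun h _ _ _ _ _ => h _, fun h a => h a.c0 a.c1 a.c2 a.c3 a.c4⟩

/-- The inverse of `a`, written as `a ^ 30`. -/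
def invFn (a : K32) : K32 :=
  let a2 := a * a
  let a4 := a2 * a2
  let a8 := a4 * a4
  a2 * a4 * (a8 * (a8 * a8))

set_option maxRecDepth 10000 in
lemma mul_invFn : ∀ a : K32, a ≠ 0 → a * invFn a = 1 := by
  rw [forall_iff]; decide +kernel

lemma isField : IsField K32 where
  exists_pair_ne := ⟨0, 1, by decide⟩
  mul_comm := mul_comm
  mul_inv_cancel {a} h := ⟨invFn a, mul_invFn a h⟩

noncomputable instance : Field K32 := isField.toField

/-- The identification with Mathlib's field of 32 elements. -/
lemma exists_ringEquiv : Nonempty (K32 ≃+* GaloisField 2 5) := by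
  have := Fintype.ofFinite (GaloisField 2 5)
  refine ⟨FiniteField.ringEquivOfCardEq ?_⟩
  rw [card_eq, Fintype.card_eq_nat_card, GaloisField.card 2 5 (by norm_num)]
  norm_num

/-- The element whose coordinates are the binary digits of `n`. -/
def k (n : ℕ) : K32 := ⟨n.testBit 0, n.testBit 1, n.testBit 2, n.testBit 3, n.testBit 4⟩

/-- Table of the `x`-coordinates of the 42 points. -/
def xt (j : Fin 7) (s : Fin 2) (l : Fin 3) : K32 :=
  k ([0, 26, 27, 27, 26, 0, 13, 31, 29, 29, 31, 13, 7, 4, 24, 24, 4, 7, 25, 12, 18, 18, 12, 25,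
    10, 16, 20, 20, 16, 10, 3, 22, 28, 22, 3, 28, 14, 30, 21, 30, 14, 21].getD
      (6 * j.val + 3 * s.val + l.val) 0)

/-- Table of the `y`-coordinates of the 42 points. -/
def yt (j : Fin 7) (s : Fin 2) (l : Fin 3) : K32 :=
  k ([0, 17, 22, 14, 9, 1, 8, 15, 29, 23, 3, 31, 27, 7, 5, 27, 18, 8, 5, 4, 27, 1, 19, 27,
    13, 1, 0, 8, 29, 8, 30, 15, 25, 1, 25, 19, 6, 21, 25, 25, 23, 17].getD
      (6 * j.val + 3 * s.val + l.val) 0)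

/-- First coordinate of the 14 image points under the 3-isogeny. -/
def Xt (j : Fin 7) : K32 := k ([1, 15, 27, 7, 14, 9, 5].getD j.val 0)

/-- Second coordinate of the 14 image points under the 3-isogeny. -/
def Yt (j : Fin 7) (s : Fin 2) : K32 :=
  k ([7, 6, 26, 11, 25, 1, 26, 9, 12, 29, 8, 11, 10, 31].getD (2 * j.val + s.val) 0)

lemma curve_eq : ∀ j s l, yt j s l * yt j s l + (xt j s l * (xt j s l + 1) + 1) * yt j s l
    + xt j s l * xt j s l * (xt j s l * (xt j s l + k 20)) = 0 := by
  decide +kernel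

lemma q_ne : ∀ j s l, xt j s l * (xt j s l + k 25) + k 25 ≠ 0 := by
  decide +kernel

lemma u_eq : ∀ j s l, xt j s l * (xt j s l * xt j s l) + k 25 =
    Xt j * (xt j s l * (xt j s l + k 25) + k 25) := by
  decide +kernel

lemma v_eq : ∀ j s l,
    (k 18 + xt j s l * (k 5 + xt j s l * (k 13 + xt j s l * (k 31 + xt j s l * k 29))))
     + (k 6 + xt j s l * xt j s l * (k 25 + xt j s l * xt j s l)) * yt j s l =
    Yt j s * ((xt j s l * (xt j s l + k 25) + k 25) * (xt j s l * (xt j s l + k 25) + k 25)) := by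
  decide +kernel

lemma xt_ne : ∀ j s l l', xt j s l = xt j s l' → l = l' := by decide +kernel

lemma Yt_ne : ∀ j s s', Yt j s = Yt j s' → s = s' := by decide +kernel

lemma Xt_ne : ∀ j j', Xt j = Xt j' → j = j' := by decide +kernel

lemma xy_inj : ∀ j s l j' s' l', xt j s l = xt j' s' l' → yt j s l = yt j' s' l' →
    j = j' ∧ s = s' ∧ l = l' := by decide +kernel

lemma aniso : ∀ a b : K32, a * a + a * b + b * b = 0 → a = 0 ∧ b = 0 := by
  simp only [forall_iff]; decide +kernel

end K32

open Polynomial in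
/-- Plane model of a curve `y² + h y + g = 0` with two conjugate points at infinity, 42 affine
rational points sorted into 14 fibres of size 3 of a degree 3 map `(u / q, (va + vb y) / q²)`. -/
structure CurveData (F : Type*) [Field F] where
  x : Fin 7 × Fin 2 × Fin 3 → F
  y : Fin 7 × Fin 2 × Fin 3 → F
  X : Fin 7 → F
  Y : Fin 7 → Fin 2 → F
  h : F[X]
  g : F[X]
  q : F[X]
  u : F[X]
  va : F[X]
  vb : F[X]
  deg_h : h.natDegree ≤ 2
  deg_g : g.natDegree ≤ 4
  deg_q : q.natDegree ≤ 3
  deg_u : u.natDegree ≤ 3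
  deg_va : va.natDegree ≤ 6
  deg_vb : vb.natDegree ≤ 4
  aniso : ∀ a b : F, a ^ 2 - a * b * h.coeff 2 + b ^ 2 * g.coeff 4 = 0 → a = 0 ∧ b = 0
  curve : ∀ i, y i ^ 2 + h.eval (x i) * y i + g.eval (x i) = 0
  q_ne : ∀ i, q.eval (x i) ≠ 0
  u_eq : ∀ i, u.eval (x i) = X i.1 * q.eval (x i)
  v_eq : ∀ i, va.eval (x i) + vb.eval (x i) * y i = Y i.1 i.2.1 * q.eval (x i) ^ 2
  x_inj : ∀ j s l l', x (j, s, l) = x (j, s, l') → l = l'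
  Y_inj : ∀ j s s', Y j s = Y j s' → s = s'
  X_inj : Function.Injective X
  xy_inj : ∀ i i', x i = x i' → y i = y i' → i = i'

namespace CurveData

open Polynomial

variable {F : Type*} [Field F] (D : CurveData F)

/-- The norm of `a + b y`. -/
noncomputable def nrm (a b : F[X]) : F[X] := a ^ 2 - a * b * D.h + b ^ 2 * D.g

lemma nrm_natDegree (a b : F[X]) (m : ℕ) (ha : a.natDegree ≤ m + 2) (hb : b.natDegree ≤ m) :
    (D.nrm a b).natDegree ≤ 2 * (m + 2) := by
  have h1 := D.deg_h
  have h2 := D.deg_g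
  unfold nrm
  refine (natDegree_add_le_of_degree_le (n := 2 * (m + 2)) ?_ ?_)
  · refine (natDegree_sub_le_of_le (m := 2 * (m + 2)) (n := 2 * (m + 2)) ?_ ?_).trans (by simp)
    · exact natDegree_pow_le_of_le 2 ha
    · refine (natDegree_mul_le_of_le (natDegree_mul_le_of_le ha hb) h1).trans (by omega)
  · refine (natDegree_mul_le_of_le (natDegree_pow_le_of_le 2 hb) h2).trans (by omega)

lemma nrm_coeff (a b : F[X]) (m : ℕ) (ha : a.natDegree ≤ m + 2) (hb : b.natDegree ≤ m) :
    (D.nrm a b).coeff (2 * (m + 2)) =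
      a.coeff (m + 2) ^ 2 - a.coeff (m + 2) * b.coeff m * D.h.coeff 2
        + b.coeff m ^ 2 * D.g.coeff 4 := by
  have h1 := D.deg_h
  have h2 := D.deg_g
  unfold nrm
  rw [coeff_add, coeff_sub, coeff_pow_of_natDegree_le ha]
  have e1 : (a * b * D.h).coeff (m + 2 + m + 2) =
      a.coeff (m + 2) * b.coeff m * D.h.coeff 2 := by
    rw [coeff_mul_add_eq_of_natDegree_le (natDegree_mul_le_of_le ha hb) h1,
      coeff_mul_add_eq_of_natDegree_le ha hb]
  have e2 : (b ^ 2 * D.g).coeff (2 * m + 4) = b.coeff m ^ 2 * D.g.coeff 4 := by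
    rw [coeff_mul_add_eq_of_natDegree_le (natDegree_pow_le_of_le 2 hb) h2, coeff_pow_of_natDegree_le hb]
  rw [show 2 * (m + 2) = m + 2 + m + 2 by ring, e1, show m + 2 + m + 2 = 2 * m + 4 by ring, e2]

lemma nrm_const (a b : F[X]) (hb : b = 0) (ha : a ≠ 0) : D.nrm a b ≠ 0 := by
  subst hb; simpa [nrm] using ha

lemma nrm_ne_zero (a b : F[X]) (hab : ¬ (a = 0 ∧ b = 0)) : D.nrm a b ≠ 0 := by
  by_cases hb : b = 0
  · exact D.nrm_const a b hb (fun h => hab ⟨h, hb⟩)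
  intro h0
  by_cases hd : a.natDegree ≤ b.natDegree + 2
  · have := D.nrm_coeff a b _ hd le_rfl
    rw [h0, coeff_zero] at this
    exact hb (leadingCoeff_eq_zero.1 (D.aniso _ _ this.symm).2)
  · obtain ⟨m, hm⟩ : ∃ m, a.natDegree = m + 2 := ⟨a.natDegree - 2, by omega⟩
    have := D.nrm_coeff a b m hm.le (by omega)
    rw [h0, coeff_zero] at this
    have h3 := (D.aniso _ _ this.symm).1
    rw [← hm] at h3
    have := leadingCoeff_eq_zero.1 h3
    rw [this] at hd
    simp at hd

open Classical in
/-- Zeros of `a + b y` are bounded by the number of roots of the norm. -/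
lemma zeros_le_natDegree (a b : F[X]) (hab : ¬ (a = 0 ∧ b = 0)) :
    (Finset.univ.filter fun i => a.eval (D.x i) + b.eval (D.x i) * D.y i = 0).card
      ≤ (D.nrm a b).natDegree := by
  have hN := D.nrm_ne_zero a b hab
  set Z := Finset.univ.filter fun i => a.eval (D.x i) + b.eval (D.x i) * D.y i = 0 with hZ
  suffices h : Z.val.map D.x ≤ (D.nrm a b).roots by
    have := Multiset.card_le_card h
    rw [Multiset.card_map] at this
    exact this.trans (card_roots' _)
  rw [Multiset.le_iff_count]
  intro c
  rw [Multiset.count_map, ← Finset.filter_val, Finset.card_val, count_roots]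
  set W := Z.filter fun i => c = D.x i with hW
  have hWm : ∀ i ∈ W, D.x i = c ∧ a.eval c + b.eval c * D.y i = 0 ∧
      D.y i ^ 2 + D.h.eval c * D.y i + D.g.eval c = 0 := by
    intro i hi
    have h1 := D.curve i
    simp only [hW, hZ, Finset.mem_filter, Finset.mem_univ, true_and] at hi
    obtain ⟨h2, rfl⟩ := hi
    exact ⟨rfl, h2, h1⟩
  have hroot : ∀ i ∈ W, 1 ≤ rootMultiplicity c (D.nrm a b) := by
    intro i hi
    obtain ⟨-, h2, h3⟩ := hWm i hi
    refine (rootMultiplicity_pos hN).2 ?_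
    rw [IsRoot, nrm]
    simp only [eval_add, eval_sub, eval_mul, eval_pow]
    have : a.eval c = - (b.eval c * D.y i) := by linear_combination h2
    rw [this]
    linear_combination (b.eval c) ^ 2 * h3
  have hy : ∀ i ∈ W, ∀ j ∈ W, i ≠ j → D.y i ≠ D.y j := fun i hi j hj hij h =>
    hij (D.xy_inj i j ((hWm i hi).1.trans (hWm j hj).1.symm) h)
  have hsum : ∀ i ∈ W, ∀ j ∈ W, i ≠ j → D.y i + D.y j = - D.h.eval c := by
    intro i hi j hj hij
    have h1 := (hWm i hi).2.2
    have h2 := (hWm j hj).2.2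
    have h3 := sub_ne_zero.2 (hy i hi j hj hij)
    apply mul_left_cancel₀ h3
    linear_combination h1 - h2
  have hle2 : W.card ≤ 2 := by
    by_contra hcon
    push Not at hcon
    obtain ⟨i, j, k, hi, hj, hk, hij, hik, hjk⟩ := Finset.two_lt_card_iff.1 hcon
    exact hy j hj k hk hjk (add_left_cancel ((hsum i hi j hj hij).trans (hsum i hi k hk hik).symm))
  rcases Nat.lt_or_ge 1 W.card with h2 | h1
  · obtain ⟨i, j, hi, hj, hij⟩ := Finset.one_lt_card_iff.1 h2
    refine hle2.trans ?_
    rw [le_rootMultiplicity_iff hN]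
    have e1 := (hWm i hi).2.1
    have e2 := (hWm j hj).2.1
    have hb0 : b.eval c = 0 := by
      have h3 := sub_ne_zero.2 (hy i hi j hj hij)
      apply mul_right_cancel₀ h3
      linear_combination e1 - e2
    have ha0 : a.eval c = 0 := by rw [hb0] at e1; simpa using e1
    obtain ⟨a', rfl⟩ := dvd_iff_isRoot.2 ha0
    obtain ⟨b', rfl⟩ := dvd_iff_isRoot.2 hb0
    exact ⟨a' ^ 2 - a' * b' * D.h + b' ^ 2 * D.g, by rw [nrm]; ring⟩
  · rcases Nat.eq_zero_or_pos W.card with h0 | h0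
    · omega
    · obtain ⟨i, hi⟩ := Finset.card_pos.1 h0
      exact h1.trans (hroot i hi)

/-- Homogenisation of `A (u / q)` by `q ^ n`. -/
lemma exists_homog (A : F[X]) (n : ℕ) (hA : A.natDegree ≤ n) :
    ∃ H : F[X], H.natDegree ≤ 3 * n ∧
      ∀ i, H.eval (D.x i) = D.q.eval (D.x i) ^ n * A.eval (D.X i.1) := by
  refine ⟨∑ k ∈ Finset.range (n + 1), C (A.coeff k) * (D.u ^ k * D.q ^ (n - k)), ?_, ?_⟩
  · refine natDegree_sum_le_of_forall_le _ _ fun k hk => ?_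
    rw [Finset.mem_range] at hk
    refine (natDegree_C_mul_le _ _).trans ((natDegree_mul_le_of_le
      (natDegree_pow_le_of_le k D.deg_u) (natDegree_pow_le_of_le (n - k) D.deg_q)).trans ?_)
    omega
  · intro i
    rw [eval_finsetSum, eval_eq_sum_range' (Nat.lt_succ_of_le hA), Finset.mul_sum]
    refine Finset.sum_congr rfl fun k hk => ?_
    rw [Finset.mem_range] at hk
    simp only [eval_mul, eval_C, eval_pow, D.u_eq]
    rw [show D.q.eval (D.x i) ^ n = D.q.eval (D.x i) ^ k * D.q.eval (D.x i) ^ (n - k) by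
      rw [← pow_add]; congr 1; omega]
    ring

/-- The parameter space. -/
abbrev Par (F : Type*) [Field F] (n : ℕ) :=
  (degreeLT F (n + 1) × degreeLT F (n + 1)) × (degreeLT F (n - 1) × degreeLT F (n - 1))

/-- The evaluation function. -/
noncomputable def val (A0 A1 B0 B1 : F[X]) (i : Fin 7 × Fin 2 × Fin 3) : F :=
  (A0.eval (D.X i.1) + B0.eval (D.X i.1) * D.Y i.1 i.2.1)
    + D.x i * (A1.eval (D.X i.1) + B1.eval (D.X i.1) * D.Y i.1 i.2.1)

/-- Numbering of the points. -/
def enum : Fin 42 ≃ Fin 7 × Fin 2 × Fin 3 :=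
  finProdFinEquiv.symm.trans ((Equiv.refl (Fin 7)).prodCongr (finProdFinEquiv (m := 2) (n := 3)).symm)

/-- The evaluation map. -/
noncomputable def ev (n : ℕ) : Par F n →ₗ[F] (Fin 42 → F) where
  toFun p i := D.val p.1.1 p.1.2 p.2.1 p.2.2 (enum i)
  map_add' p p' := by
    funext i
    simp [val]
    ring
  map_smul' c p := by
    funext i
    simp [val]
    ring

lemma zero_of_vanish {A : F[X]} (hA : A.degree < 7) (h : ∀ j, A.eval (D.X j) = 0) : A = 0 := by
  by_contra h0
  refine h0 (eq_zero_of_natDegree_lt_card_of_eval_eq_zero A D.X_inj h ?_)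
  rw [Fintype.card_fin]
  exact (natDegree_lt_iff_degree_lt h0).2 hA

lemma vanish_pair {A B : F[X]} (j : Fin 7)
    (h : ∀ s, A.eval (D.X j) + B.eval (D.X j) * D.Y j s = 0) :
    A.eval (D.X j) = 0 ∧ B.eval (D.X j) = 0 := by
  have hY : D.Y j 0 - D.Y j 1 ≠ 0 := sub_ne_zero.2 fun h => by simpa using D.Y_inj _ _ _ h
  have hB : B.eval (D.X j) = 0 := by
    apply mul_right_cancel₀ hY
    linear_combination h 0 - h 1
  refine ⟨?_, hB⟩
  have := h 0
  rw [hB] at this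
  simpa using this

lemma ev_injective (n : ℕ) (hn : n ≤ 6) : Function.Injective (D.ev n) := by
  rw [injective_iff_map_eq_zero]
  rintro ⟨⟨⟨A0, hA0⟩, ⟨A1, hA1⟩⟩, ⟨⟨B0, hB0⟩, ⟨B1, hB1⟩⟩⟩ h
  have hv : ∀ i, D.val A0 A1 B0 B1 i = 0 := by
    intro i
    have := congrFun h (enum.symm i)
    simpa [ev] using this
  have key : ∀ j s, (A0.eval (D.X j) + B0.eval (D.X j) * D.Y j s = 0) ∧
      (A1.eval (D.X j) + B1.eval (D.X j) * D.Y j s = 0) := by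
    intro j s
    have h0 := hv (j, s, 0)
    have h1 := hv (j, s, 1)
    simp only [val] at h0 h1
    have hx : D.x (j, s, 0) - D.x (j, s, 1) ≠ 0 :=
      sub_ne_zero.2 fun h => by simpa using D.x_inj _ _ _ _ h
    have e1 : A1.eval (D.X j) + B1.eval (D.X j) * D.Y j s = 0 := by
      apply mul_left_cancel₀ hx
      linear_combination h0 - h1
    refine ⟨?_, e1⟩
    rw [e1] at h0
    simpa using h0
  have p0 := fun j => D.vanish_pair (A := A0) (B := B0) j fun s => (key j s).1
  have p1 := fun j => D.vanish_pair (A := A1) (B := B1) j fun s => (key j s).2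
  rw [mem_degreeLT] at hA0 hA1 hB0 hB1
  have l1 : ((n + 1 : ℕ) : WithBot ℕ) ≤ 7 := by exact_mod_cast (by omega : n + 1 ≤ 7)
  have l2 : ((n - 1 : ℕ) : WithBot ℕ) ≤ 7 := by exact_mod_cast (by omega : n - 1 ≤ 7)
  have a0 := D.zero_of_vanish (hA0.trans_le l1) fun j => (p0 j).1
  have a1 := D.zero_of_vanish (hA1.trans_le l1) fun j => (p1 j).1
  have b0 := D.zero_of_vanish (hB0.trans_le l2) fun j => (p0 j).2
  have b1 := D.zero_of_vanish (hB1.trans_le l2) fun j => (p1 j).2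
  subst a0 a1 b0 b1
  rfl

lemma finrank_par (n : ℕ) (hn : 1 ≤ n) : Module.finrank F (Par F n) = 4 * n := by
  have hd : ∀ m, Module.finrank F (degreeLT F m) = m := fun m => by
    rw [(degreeLTEquiv F m).finrank_eq, Module.finrank_fin_fun]
  have : ∀ m, Module.Finite F (degreeLT F m) := fun m =>
    Module.Finite.equiv (degreeLTEquiv F m).symm
  rw [Module.finrank_prod, Module.finrank_prod, Module.finrank_prod, hd, hd]
  omega

/-- Clearing denominators: a codeword is, up to nonvanishing factors, of the form `a + b y`. -/
lemma exists_rep (n : ℕ) (A0 A1 B0 B1 : F[X]) (hA0 : A0.natDegree ≤ n) (hA1 : A1.natDegree ≤ n)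
    (hB : (B0 = 0 ∧ B1 = 0) ∨ ∃ k, n = k + 2 ∧ B0.natDegree ≤ k ∧ B1.natDegree ≤ k) (hn : 1 ≤ n) :
    ∃ a b : F[X], a.natDegree ≤ (3 * n - 1) + 2 ∧ b.natDegree ≤ 3 * n - 1 ∧
      ∀ i, a.eval (D.x i) + b.eval (D.x i) * D.y i =
        D.q.eval (D.x i) ^ n * D.val A0 A1 B0 B1 i := by
  obtain ⟨a0, da0, ha0⟩ := D.exists_homog A0 n hA0
  obtain ⟨a1, da1, ha1⟩ := D.exists_homog A1 n hA1
  have d1 : (a0 + Polynomial.X * a1).natDegree ≤ 3 * n + 1 := by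
    refine natDegree_add_le_of_degree_le (da0.trans (by omega)) ?_
    exact (natDegree_mul_le_of_le natDegree_X_le da1).trans (by omega)
  rcases hB with ⟨rfl, rfl⟩ | ⟨k, rfl, hB0, hB1⟩
  · refine ⟨a0 + Polynomial.X * a1, 0, d1.trans (by omega), by simp, fun i => ?_⟩
    simp [val, ha0, ha1]
    ring
  · obtain ⟨b0, db0, hb0⟩ := D.exists_homog B0 k hB0
    obtain ⟨b1, db1, hb1⟩ := D.exists_homog B1 k hB1
    have d2 : (b0 + Polynomial.X * b1).natDegree ≤ 3 * k + 1 := by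
      refine natDegree_add_le_of_degree_le (db0.trans (by omega)) ?_
      exact (natDegree_mul_le_of_le natDegree_X_le db1).trans (by omega)
    refine ⟨a0 + Polynomial.X * a1 + (b0 + Polynomial.X * b1) * D.va, (b0 + Polynomial.X * b1) * D.vb, ?_, ?_, fun i => ?_⟩
    · refine natDegree_add_le_of_degree_le (d1.trans (by omega)) ?_
      exact (natDegree_mul_le_of_le d2 D.deg_va).trans (by omega)
    · exact (natDegree_mul_le_of_le d2 D.deg_vb).trans (by omega)
    · have hv := D.v_eq i
      simp only [val, eval_add, eval_mul, eval_X, ha0, ha1, hb0, hb1, pow_add]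
      linear_combination (D.q.eval (D.x i) ^ k * B0.eval (D.X i.1)
        + D.x i * (D.q.eval (D.x i) ^ k * B1.eval (D.X i.1))) * hv

lemma natDegree_le_of_mem {A : F[X]} {n : ℕ} (h : A ∈ degreeLT F (n + 1)) : A.natDegree ≤ n := by
  rw [mem_degreeLT] at h
  by_cases h0 : A = 0
  · simp [h0]
  · exact Nat.lt_succ_iff.1 ((natDegree_lt_iff_degree_lt h0).2 h)

open Classical in
lemma min_dist (n : ℕ) (hn : 1 ≤ n) (w : Fin 42 → F) (hw : w ∈ LinearMap.range (D.ev n))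
    (hw0 : w ≠ 0) : 40 - 6 * n ≤ Nat.card {i : Fin 42 // w i ≠ 0} := by
  obtain ⟨⟨⟨⟨A0, hA0⟩, ⟨A1, hA1⟩⟩, ⟨⟨B0, hB0⟩, ⟨B1, hB1⟩⟩⟩, rfl⟩ := hw
  have hB : (B0 = 0 ∧ B1 = 0) ∨ ∃ k, n = k + 2 ∧ B0.natDegree ≤ k ∧ B1.natDegree ≤ k := by
    rcases Nat.lt_or_ge n 2 with h | h
    · left
      have : n - 1 = 0 := by omega
      rw [this, mem_degreeLT] at hB0 hB1
      simpa using And.intro hB0 hB1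
    · right
      obtain ⟨k, rfl⟩ : ∃ k, n = k + 2 := ⟨n - 2, by omega⟩
      exact ⟨k, rfl, natDegree_le_of_mem hB0, natDegree_le_of_mem hB1⟩
  obtain ⟨a, b, da, db, hab⟩ := D.exists_rep n A0 A1 B0 B1 (natDegree_le_of_mem hA0)
    (natDegree_le_of_mem hA1) hB hn
  have hne : ¬ (a = 0 ∧ b = 0) := by
    rintro ⟨rfl, rfl⟩
    refine hw0 (funext fun i => ?_)
    have := hab (enum i)
    simp only [eval_zero, zero_mul, add_zero] at this
    exact (mul_eq_zero.1 this.symm).resolve_left (pow_ne_zero _ (D.q_ne _))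
  have hz := (D.zeros_le_natDegree a b hne).trans (D.nrm_natDegree a b _ da db)
  set w := D.ev n ((⟨A0, hA0⟩, ⟨A1, hA1⟩), (⟨B0, hB0⟩, ⟨B1, hB1⟩)) with hwdef
  have hle : (Finset.univ.filter fun i : Fin 42 => w i = 0).card ≤
      (Finset.univ.filter fun i => a.eval (D.x i) + b.eval (D.x i) * D.y i = 0).card := by
    refine Finset.card_le_card_of_injOn enum ?_ enum.injective.injOn
    intro i hi
    simp only [Finset.coe_filter, Finset.mem_univ, true_and, Set.mem_ofPred_eq] at hi ⊢
    have hi' : D.val A0 A1 B0 B1 (enum i) = 0 := hi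
    rw [hab, hi', mul_zero]
  have hsplit := Finset.card_filter_add_card_filter_not
    (s := (Finset.univ : Finset (Fin 42))) (fun i => w i = 0)
  rw [Finset.card_univ, Fintype.card_fin] at hsplit
  rw [Nat.card_eq_fintype_card, Fintype.card_subtype]
  simp only [ne_eq] at hsplit ⊢
  omega

lemma locality (n : ℕ) (i : Fin 42) : ∃ I : Finset (Fin 42), i ∉ I ∧ I.card ≤ 2 ∧
    ∀ v ∈ LinearMap.range (D.ev n), ∀ w ∈ LinearMap.range (D.ev n),
      (∀ j ∈ I, v j = w j) → v i = w i := by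
  obtain ⟨⟨j, s, l⟩, rfl⟩ := enum.symm.surjective i
  have hl : l + 1 ≠ l ∧ l + 2 ≠ l ∧ l + 1 ≠ l + 2 := by revert l; decide
  refine ⟨{enum.symm (j, s, l + 1), enum.symm (j, s, l + 2)}, ?_, Finset.card_le_two, ?_⟩
  · simp [hl.1.symm, hl.2.1.symm]
  · rintro _ ⟨p, rfl⟩ _ ⟨p', rfl⟩ h
    rw [← sub_eq_zero, ← Pi.sub_apply, ← map_sub]
    have h1 : D.ev n (p - p') (enum.symm (j, s, l + 1)) = 0 := by
      rw [map_sub, Pi.sub_apply, sub_eq_zero]; exact h _ (by simp)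
    have h2 : D.ev n (p - p') (enum.symm (j, s, l + 2)) = 0 := by
      rw [map_sub, Pi.sub_apply, sub_eq_zero]; exact h _ (by simp)
    generalize p - p' = r at h1 h2 ⊢
    obtain ⟨⟨A0, A1⟩, ⟨B0, B1⟩⟩ := r
    simp only [ev, LinearMap.coe_mk, AddHom.coe_mk, Equiv.apply_symm_apply, val] at h1 h2 ⊢
    have hx : D.x (j, s, l + 1) - D.x (j, s, l + 2) ≠ 0 :=
      sub_ne_zero.2 fun h => hl.2.2 (D.x_inj _ _ _ _ h)
    have e1 : eval (D.X j) (A1 : F[X]) + eval (D.X j) (B1 : F[X]) * D.Y j s = 0 := by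
      apply mul_left_cancel₀ hx
      linear_combination h1 - h2
    rw [e1] at h1 ⊢
    simpa using h1

theorem exists_code {F : Type*} [Field F] (D : CurveData F) (t : ℕ) (ht : Even t) (h2 : 2 ≤ t) (h12 : t ≤ 12) :
    ∃ C : Submodule F (Fin 42 → F), Module.finrank F C = 2 * t ∧
      (∀ x : Fin 42 → F, x ∈ C → x ≠ 0 → 40 - 3 * t ≤ Nat.card {i : Fin 42 // x i ≠ 0}) ∧
      (∀ i : Fin 42, ∃ I : Finset (Fin 42), i ∉ I ∧ I.card ≤ 2 ∧
        ∀ x ∈ C, ∀ y ∈ C, (∀ j ∈ I, x j = y j) → x i = y i) := by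
  obtain ⟨n, rfl⟩ := ht
  refine ⟨LinearMap.range (D.ev n), ?_, fun w hw h0 => ?_, D.locality n⟩
  · rw [LinearMap.finrank_range_of_inj (D.ev_injective n (by omega)), finrank_par n (by omega)]
    ring
  · have := D.min_dist n (by omega) w hw h0
    rwa [show 3 * (n + n) = 6 * n by ring]

end CurveData

open Polynomial K32 in
/-- The curve data over any field isomorphic to `K32`. -/
noncomputable def curveOf {F : Type*} [Field F] (e : K32 ≃+* F) : CurveData F where
  x i := e (xt i.1 i.2.1 i.2.2)
  y i := e (yt i.1 i.2.1 i.2.2)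
  X j := e (Xt j)
  Y j s := e (Yt j s)
  h := X ^ 2 + X + 1
  g := X ^ 4 + C (e (k 20)) * X ^ 3
  q := X ^ 2 + C (e (k 25)) * X + C (e (k 25))
  u := X ^ 3 + C (e (k 25))
  va := C (e (k 29)) * X ^ 4 + C (e (k 31)) * X ^ 3 + C (e (k 13)) * X ^ 2 + C (e (k 5)) * X
    + C (e (k 18))
  vb := X ^ 4 + C (e (k 25)) * X ^ 2 + C (e (k 6))
  deg_h := by compute_degree
  deg_g := by compute_degree
  deg_q := by compute_degree!
  deg_u := by compute_degree
  deg_va := by compute_degree!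
  deg_vb := by compute_degree
  aniso a b hab := by
    have h1 : (X ^ 2 + X + 1 : F[X]).coeff 2 = 1 := by
      simp [coeff_X, coeff_one]
    have h2 : (X ^ 4 + C (e (k 20)) * X ^ 3 : F[X]).coeff 4 = 1 := by
      simp [coeff_X_pow]
    rw [h1, h2] at hab
    obtain ⟨a, rfl⟩ := e.surjective a
    obtain ⟨b, rfl⟩ := e.surjective b
    have hab' : a * a + a * b + b * b = 0 := by
      apply e.injective
      have : a * a + a * b + b * b = a * a - a * b + b * b := rfl
      rw [this]
      simp only [map_add, map_sub, map_mul, map_zero]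
      linear_combination hab
    obtain ⟨rfl, rfl⟩ := K32.aniso a b hab'
    simp
  curve i := by
    have := congrArg e (curve_eq i.1 i.2.1 i.2.2)
    simp only [map_add, map_mul, map_zero, map_one] at this
    simp only [eval_add, eval_mul, eval_pow, eval_X, eval_C, eval_one]
    linear_combination this
  q_ne i := by
    intro h0
    refine K32.q_ne i.1 i.2.1 i.2.2 (e.injective ?_)
    simp only [eval_add, eval_mul, eval_pow, eval_X, eval_C] at h0
    simp only [map_add, map_mul, map_zero]
    linear_combination h0
  u_eq i := by
    have := congrArg e (K32.u_eq i.1 i.2.1 i.2.2)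
    simp only [map_add, map_mul] at this
    simp only [eval_add, eval_mul, eval_pow, eval_X, eval_C]
    linear_combination this
  v_eq i := by
    have := congrArg e (K32.v_eq i.1 i.2.1 i.2.2)
    simp only [map_add, map_mul] at this
    simp only [eval_add, eval_mul, eval_pow, eval_X, eval_C]
    linear_combination this
  x_inj j s l l' h := xt_ne j s l l' (e.injective h)
  Y_inj j s s' h := Yt_ne j s s' (e.injective h)
  X_inj j j' h := Xt_ne j j' (e.injective h)
  xy_inj i i' h h' := by
    obtain ⟨h1, h2, h3⟩ := K32.xy_inj _ _ _ _ _ _ (e.injective h) (e.injective h')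
    exact Prod.ext h1 (Prod.ext h2 h3)

theorem exists_LRC_F32_length42 :
    ∀ t : ℕ, Even t → 2 ≤ t → t ≤ 12 →
      ∃ C : Submodule (GaloisField 2 5) (Fin 42 → GaloisField 2 5),
        Module.finrank (GaloisField 2 5) C = 2 * t ∧
        (∀ x : Fin 42 → GaloisField 2 5, x ∈ C → x ≠ 0 →
          40 - 3 * t ≤ Nat.card {i : Fin 42 // x i ≠ 0}) ∧
        (∀ i : Fin 42, ∃ I : Finset (Fin 42), i ∉ I ∧ I.card ≤ 2 ∧
          ∀ x ∈ C, ∀ y ∈ C, (∀ j ∈ I, x j = y j) → x i = y i) := by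
  intro t ht h2 h12
  obtain ⟨e⟩ := K32.exists_ringEquiv
  exact (curveOf e).exists_code t ht h2 h12
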